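/- Let m, n ∈ ℤ≥0 and define operators on F by G⁺(i−1/2) = −(i+m)Ψ⁺(i−1/2) and G⁻(i−1/2) = −(i+n)Ψ⁻(i−1/2), i ∈ ℤ. Then: (a) Ker_F G⁻(m+1/2) ∩ Ker_F G⁺(n+1/2) equals the span F̄(−m/z, −n/z) of those basis monomials of F that contain neither the factor Ψ⁺(−m−1/2) nor the factor Ψ⁻(−n−1/2) (i.e. the exterior algebra on the generators Ψ⁺(−i−1/2), Ψ⁻(−j−1/2) with i, j ∈ ℤ≥0, i ≠ m, j ≠ n); (b) F̄(−m/z, −n/z) is invariant under all G⁺(r), G⁻(r), r ∈ 1/2+ℤ, and is irreducible: its only subspaces invariant under all these operators are {0} and F̄(−m/z, −n/z). -/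

import Mathlib

noncomputable section

/-- The fermionic Fock space `F`: it has basis indexed by pairs `(A, B)` of finite sets of
nonnegative integers, the pair `(A, B)` corresponding to the basis monomial
`Ψ⁺(−n₁−1/2)⋯Ψ⁺(−n_r−1/2)·Ψ⁻(−k₁−1/2)⋯Ψ⁻(−k_s−1/2)·𝟙` where `A = {n₁ > ⋯ > n_r}` and
`B = {k₁ > ⋯ > k_s}`. -/
abbrev FockF : Type := (Finset ℕ × Finset ℕ) →₀ ℂ

/-- The vacuum vector `𝟙`. -/
def vac : FockF := Finsupp.single (∅, ∅) 1

/-- `(−1)^{#{a ∈ S : a > m}}`. -/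
def sgn (S : Finset ℕ) (m : ℕ) : ℂ := (-1 : ℂ) ^ (S.filter fun a => m < a).card

/-- `Ψ⁺(−m−1/2)`: exterior multiplication (creation). -/
def psiPneg (m : ℕ) : Module.End ℂ FockF :=
  Finsupp.lsum ℂ fun AB : Finset ℕ × Finset ℕ => LinearMap.toSpanSingleton ℂ FockF
    (if m ∈ AB.1 then 0 else sgn AB.1 m • Finsupp.single (insert m AB.1, AB.2) 1)

/-- `Ψ⁺(m+1/2)`: the odd contraction operator pairing with `Ψ⁻(−m−1/2)` (annihilation). -/
def psiPpos (m : ℕ) : Module.End ℂ FockF :=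
  Finsupp.lsum ℂ fun AB : Finset ℕ × Finset ℕ => LinearMap.toSpanSingleton ℂ FockF
    (if m ∈ AB.2 then ((-1 : ℂ) ^ AB.1.card * sgn AB.2 m) • Finsupp.single (AB.1, AB.2.erase m) 1
     else 0)

/-- `Ψ⁻(−m−1/2)`: exterior multiplication (creation). -/
def psiMneg (m : ℕ) : Module.End ℂ FockF :=
  Finsupp.lsum ℂ fun AB : Finset ℕ × Finset ℕ => LinearMap.toSpanSingleton ℂ FockF
    (if m ∈ AB.2 then 0
     else ((-1 : ℂ) ^ AB.1.card * sgn AB.2 m) • Finsupp.single (AB.1, insert m AB.2) 1)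

/-- `Ψ⁻(m+1/2)`: the odd contraction operator pairing with `Ψ⁺(−m−1/2)` (annihilation). -/
def psiMpos (m : ℕ) : Module.End ℂ FockF :=
  Finsupp.lsum ℂ fun AB : Finset ℕ × Finset ℕ => LinearMap.toSpanSingleton ℂ FockF
    (if m ∈ AB.1 then sgn AB.1 m • Finsupp.single (AB.1.erase m, AB.2) 1 else 0)

/-- `PsiP i` is the operator `Ψ⁺(i − 1/2)`, `i ∈ ℤ`. -/
def PsiP (i : ℤ) : Module.End ℂ FockF :=
  if i ≤ 0 then psiPneg (-i).toNat else psiPpos (i - 1).toNat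

/-- `PsiM i` is the operator `Ψ⁻(i − 1/2)`, `i ∈ ℤ`. -/
def PsiM (i : ℤ) : Module.End ℂ FockF :=
  if i ≤ 0 then psiMneg (-i).toNat else psiMpos (i - 1).toNat

/-- `G⁺(i−1/2) = (λ − i)·Ψ⁺(i−1/2)`. -/
def Gplus (lam : ℂ) (i : ℤ) : Module.End ℂ FockF := (lam - (i : ℂ)) • PsiP i

/-- The finite set of indices `k ≥ −p` for which `Ψ⁻(k+i−1/2)` can act nontrivially on the
basis monomial `AB`; outside of it all terms of the locally finite sum defining `G⁻` vanish. -/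
def GminusIdx (p : ℕ) (i : ℤ) (AB : Finset ℕ × Finset ℕ) : Finset ℤ :=
  (Finset.Icc (-(p : ℤ)) (-i) ∪ AB.1.image fun a : ℕ => (a : ℤ) + 1 - i).filter
    fun k => -(p : ℤ) ≤ k

/-- `G⁻(i−1/2) = −i·Ψ⁻(i−1/2) + Σ_{k=−p}^∞ χ_{−k}·Ψ⁻(k+i−1/2)` (a locally finite sum). -/
def Gminus (p : ℕ) (χ : ℤ → ℂ) (i : ℤ) : Module.End ℂ FockF :=
  (-(i : ℂ)) • PsiM i +
    Finsupp.lsum ℂ fun AB : Finset ℕ × Finset ℕ => LinearMap.toSpanSingleton ℂ FockF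
      (∑ k ∈ GminusIdx p i AB, χ (-k) • PsiM (k + i) (Finsupp.single AB 1))

end

/-- The subspace `F̄(−m/z, −n/z)` of `F`: the span of the basis monomials containing neither
the factor `Ψ⁺(−m−1/2)` nor the factor `Ψ⁻(−n−1/2)`. -/
noncomputable def Fbar (m n : ℕ) : Submodule ℂ FockF :=
  Submodule.span ℂ
    {x : FockF | ∃ A B : Finset ℕ, m ∉ A ∧ n ∉ B ∧ x = Finsupp.single (A, B) 1}


lemma sgn_ne (S : Finset ℕ) (m : ℕ) : sgn S m ≠ 0 := by
  unfold sgn; exact pow_ne_zero _ (by norm_num)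

lemma sgn'_ne (A S : Finset ℕ) (m : ℕ) : ((-1 : ℂ) ^ A.card * sgn S m) ≠ 0 :=
  mul_ne_zero (pow_ne_zero _ (by norm_num)) (sgn_ne S m)

lemma psiPneg_single (m : ℕ) (A B : Finset ℕ) : psiPneg m (Finsupp.single (A, B) 1) =
    if m ∈ A then 0 else sgn A m • Finsupp.single (insert m A, B) 1 := by
  simp [psiPneg]

lemma psiPpos_single (m : ℕ) (A B : Finset ℕ) : psiPpos m (Finsupp.single (A, B) 1) =
    if m ∈ B then ((-1 : ℂ) ^ A.card * sgn B m) • Finsupp.single (A, B.erase m) 1 else 0 := by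
  simp [psiPpos]

lemma psiMneg_single (m : ℕ) (A B : Finset ℕ) : psiMneg m (Finsupp.single (A, B) 1) =
    if m ∈ B then 0 else ((-1 : ℂ) ^ A.card * sgn B m) • Finsupp.single (A, insert m B) 1 := by
  simp [psiMneg]

lemma psiMpos_single (m : ℕ) (A B : Finset ℕ) : psiMpos m (Finsupp.single (A, B) 1) =
    if m ∈ A then sgn A m • Finsupp.single (A.erase m, B) 1 else 0 := by
  simp [psiMpos]

lemma fock_induction {p : FockF → Prop} (h0 : p 0) (ha : ∀ x y, p x → p y → p (x + y))
    (hs : ∀ (c : ℂ) A B, p (c • Finsupp.single (A, B) 1)) (v : FockF) : p v := by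
  induction v using Finsupp.induction_linear with
  | zero => exact h0
  | add x y hx hy => exact ha x y hx hy
  | single a b =>
    have := hs b a.1 a.2
    simpa using this

lemma psiMpos_apply (m : ℕ) (v : FockF) (C D : Finset ℕ) : psiMpos m v (C, D) =
    if m ∈ C then 0 else sgn (insert m C) m * v (insert m C, D) := by
  induction v using fock_induction with
  | h0 => simp
  | ha x y hx hy =>
    rw [map_add, Finsupp.add_apply, hx, hy, Finsupp.add_apply]
    split_ifs <;> ring
  | hs c A B =>
    rw [map_smul, psiMpos_single, Finsupp.smul_apply, Finsupp.smul_apply, Finsupp.single_apply]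
    by_cases hA : m ∈ A
    · by_cases hC : m ∈ C
      · have : A.erase m ≠ C := by rintro rfl; simp at hC
        simp [hA, hC, this, Finsupp.single_apply]
      · by_cases hAC : A = insert m C
        · subst hAC
          simp [hC, Finsupp.single_apply]
          split_ifs <;> ring
        · have : A.erase m ≠ C := by rintro rfl; simp [hA] at hAC
          simp [hA, hC, hAC, this]
    · have : A ≠ insert m C := by rintro rfl; simp at hA
      simp [hA, this]

lemma psiPpos_apply (m : ℕ) (v : FockF) (C D : Finset ℕ) : psiPpos m v (C, D) =
    if m ∈ D then 0 else ((-1 : ℂ) ^ C.card * sgn (insert m D) m) * v (C, insert m D) := by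
  induction v using fock_induction with
  | h0 => simp
  | ha x y hx hy =>
    rw [map_add, Finsupp.add_apply, hx, hy, Finsupp.add_apply]
    split_ifs <;> ring
  | hs c A B =>
    rw [map_smul, psiPpos_single, Finsupp.smul_apply, Finsupp.smul_apply, Finsupp.single_apply]
    by_cases hA : m ∈ B
    · by_cases hC : m ∈ D
      · have : B.erase m ≠ D := by rintro rfl; simp at hC
        simp [hA, hC, this]
      · by_cases hAC : B = insert m D
        · subst hAC
          by_cases hh : A = C
          · subst hh
            simp [hC]
            ring
          · simp [hC, hh]
        · have : B.erase m ≠ D := by rintro rfl; simp [hA] at hAC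
          simp [hA, hC, hAC, this]
    · have : B ≠ insert m D := by rintro rfl; simp at hA
      simp [hA, this]

lemma PsiP_neg (j : ℕ) : PsiP (-(j : ℤ)) = psiPneg j := by
  simp [PsiP]

lemma PsiM_neg (j : ℕ) : PsiM (-(j : ℤ)) = psiMneg j := by
  simp [PsiM]

lemma PsiP_pos (j : ℕ) : PsiP ((j : ℤ) + 1) = psiPpos j := by
  have : ¬ ((j : ℤ) + 1 ≤ 0) := by omega
  simp [PsiP, this]

lemma PsiM_pos (j : ℕ) : PsiM ((j : ℤ) + 1) = psiMpos j := by
  have : ¬ ((j : ℤ) + 1 ≤ 0) := by omega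
  simp [PsiM, this]

lemma int_cases (i : ℤ) : (∃ j : ℕ, i = -(j : ℤ)) ∨ ∃ j : ℕ, i = (j : ℤ) + 1 := by
  by_cases h : i ≤ 0
  · exact Or.inl ⟨(-i).toNat, by omega⟩
  · exact Or.inr ⟨(i - 1).toNat, by omega⟩

lemma single_mem_Fbar {m n : ℕ} {A B : Finset ℕ} (hA : m ∉ A) (hB : n ∉ B) :
    (Finsupp.single (A, B) 1 : FockF) ∈ Fbar m n :=
  Submodule.subset_span ⟨A, B, hA, hB, rfl⟩

lemma mem_Fbar (m n : ℕ) (v : FockF) :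
    v ∈ Fbar m n ↔ ∀ A B, v (A, B) ≠ 0 → m ∉ A ∧ n ∉ B := by
  constructor
  · intro hv
    induction hv using Submodule.span_induction with
    | mem x hx =>
      obtain ⟨A, B, hA, hB, rfl⟩ := hx
      intro C D h
      rw [Finsupp.single_apply] at h
      have : (A, B) = (C, D) := by
        by_contra hne
        simp [hne] at h
      cases this
      exact ⟨hA, hB⟩
    | zero => intro A B h; simp at h
    | add x y _ _ hx hy =>
      intro A B h
      by_cases h1 : x (A, B) = 0
      · exact hy A B (by simpa [h1] using h)
      · exact hx A B h1
    | smul c x _ hx =>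
      intro A B h
      refine hx A B fun h0 => h ?_
      simp [h0]
  · intro h
    rw [← Finsupp.sum_single v]
    refine Submodule.sum_mem _ fun x hx => ?_
    obtain ⟨A, B⟩ := x
    obtain ⟨hA, hB⟩ := h A B (by simpa using hx)
    have := Submodule.smul_mem _ (v (A, B)) (single_mem_Fbar hA hB)
    simpa using this

lemma Fbar_map {m n : ℕ} (T : Module.End ℂ FockF)
    (h : ∀ A B, m ∉ A → n ∉ B → T (Finsupp.single (A, B) 1) ∈ Fbar m n) :
    ∀ v ∈ Fbar m n, T v ∈ Fbar m n := by
  have : Fbar m n ≤ (Fbar m n).comap T := by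
    refine Submodule.span_le.2 ?_
    rintro _ ⟨A, B, hA, hB, rfl⟩
    exact h A B hA hB
  exact this

lemma vac_mem (U : Submodule ℂ FockF) (hM : ∀ j, ∀ v ∈ U, psiMpos j v ∈ U)
    (hP : ∀ j, ∀ v ∈ U, psiPpos j v ∈ U) (A B : Finset ℕ) : ∀ v ∈ U, v (A, B) ≠ 0 →
    (∀ C D, v (C, D) ≠ 0 → C.card + D.card ≤ A.card + B.card) →
    (Finsupp.single (∅, ∅) 1 : FockF) ∈ U := by
  induction A using Finset.induction_on with
  | insert a A ha ih =>
    intro v hv hne hmax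
    refine ih (psiMpos a v) (hM a v hv) ?_ ?_
    · rw [psiMpos_apply, if_neg ha]
      exact mul_ne_zero (sgn_ne _ _) hne
    · intro C D h
      rw [psiMpos_apply] at h
      by_cases hC : a ∈ C
      · simp [hC] at h
      · rw [if_neg hC] at h
        have := hmax _ _ (right_ne_zero_of_mul h)
        rw [Finset.card_insert_of_notMem hC, Finset.card_insert_of_notMem ha] at this
        omega
  | empty =>
    induction B using Finset.induction_on with
    | insert b B hb ih =>
      intro v hv hne hmax
      refine ih (psiPpos b v) (hP b v hv) ?_ ?_
      · rw [psiPpos_apply, if_neg hb]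
        exact mul_ne_zero (sgn'_ne _ _ _) hne
      · intro C D h
        rw [psiPpos_apply] at h
        by_cases hC : b ∈ D
        · simp [hC] at h
        · rw [if_neg hC] at h
          have := hmax _ _ (right_ne_zero_of_mul h)
          rw [Finset.card_insert_of_notMem hC, Finset.card_insert_of_notMem hb] at this
          omega
    | empty =>
      intro v hv hne hmax
      have hv' : v = v (∅, ∅) • (Finsupp.single (∅, ∅) 1 : FockF) := by
        ext ⟨C, D⟩
        by_cases h : v (C, D) = 0
        · rw [h]
          by_cases hCD : ((∅, ∅) : Finset ℕ × Finset ℕ) = (C, D)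
          · rw [← hCD] at h
            exact absurd h hne
          · simp [Finsupp.single_apply, hCD]
        · have h2 := hmax C D h
          simp only [Finset.card_empty] at h2
          have hC : C = ∅ := Finset.card_eq_zero.1 (by omega)
          have hD : D = ∅ := Finset.card_eq_zero.1 (by omega)
          subst hC hD
          simp
      rw [hv'] at hv
      exact (Submodule.smul_mem_iff _ hne).1 hv

/-- For `m, n ∈ ℤ≥0` and the operators `G⁺(i−1/2) = −(i+m)Ψ⁺(i−1/2)`,
`G⁻(i−1/2) = −(i+n)Ψ⁻(i−1/2)`:
(a) `Ker_F G⁻(m+1/2) ∩ Ker_F G⁺(n+1/2) = F̄(−m/z, −n/z)`;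
(b) `F̄(−m/z, −n/z)` is invariant under all `G⁺(r)`, `G⁻(r)`, `r ∈ 1/2+ℤ`, and is
irreducible: its only invariant subspaces are `{0}` and `F̄(−m/z, −n/z)`. -/
theorem statement7 (m n : ℕ) :
    (LinearMap.ker ((-(((m : ℤ) + 1 : ℤ) : ℂ) - (n : ℂ)) • PsiM ((m : ℤ) + 1)) ⊓
        LinearMap.ker ((-(((n : ℤ) + 1 : ℤ) : ℂ) - (m : ℂ)) • PsiP ((n : ℤ) + 1)) =
      Fbar m n) ∧
    (∀ i : ℤ, ∀ v ∈ Fbar m n,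
      ((-((i : ℂ) + (m : ℂ))) • PsiP i) v ∈ Fbar m n ∧
      ((-((i : ℂ) + (n : ℂ))) • PsiM i) v ∈ Fbar m n) ∧
    (∀ U : Submodule ℂ FockF, U ≤ Fbar m n →
      (∀ i : ℤ, ∀ v ∈ U,
        ((-((i : ℂ) + (m : ℂ))) • PsiP i) v ∈ U ∧
        ((-((i : ℂ) + (n : ℂ))) • PsiM i) v ∈ U) →
      U = ⊥ ∨ U = Fbar m n) := by
  refine ⟨?_, ?_, ?_⟩
  · have c1 : (-(((m : ℤ) + 1 : ℤ) : ℂ) - (n : ℂ)) ≠ 0 := by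
      have : (-((m : ℤ) + 1) - (n : ℤ)) ≠ 0 := by omega
      exact_mod_cast this
    have c2 : (-(((n : ℤ) + 1 : ℤ) : ℂ) - (m : ℂ)) ≠ 0 := by
      have : (-((n : ℤ) + 1) - (m : ℤ)) ≠ 0 := by omega
      exact_mod_cast this
    rw [LinearMap.ker_smul _ _ c1, LinearMap.ker_smul _ _ c2, PsiM_pos, PsiP_pos]
    ext v
    rw [Submodule.mem_inf, LinearMap.mem_ker, LinearMap.mem_ker, mem_Fbar]
    constructor
    · rintro ⟨h1, h2⟩ A B hne
      constructor
      · intro hm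
        have := DFunLike.congr_fun h1 (A.erase m, B)
        rw [psiMpos_apply, if_neg (by simp), Finset.insert_erase hm] at this
        exact mul_ne_zero (sgn_ne _ _) hne this
      · intro hm
        have := DFunLike.congr_fun h2 (A, B.erase n)
        rw [psiPpos_apply, if_neg (by simp), Finset.insert_erase hm] at this
        exact mul_ne_zero (sgn'_ne _ _ _) hne this
    · intro h
      constructor
      · ext ⟨C, D⟩
        rw [psiMpos_apply]
        have : v (insert m C, D) = 0 := by
          by_contra hne
          exact (h _ _ hne).1 (by simp)
        simp [this]
      · ext ⟨C, D⟩
        rw [psiPpos_apply]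
        have : v (C, insert n D) = 0 := by
          by_contra hne
          exact (h _ _ hne).2 (by simp)
        simp [this]
  · intro i v hv
    refine ⟨Fbar_map _ (fun A B hA hB => ?_) v hv, Fbar_map _ (fun A B hA hB => ?_) v hv⟩
    · rw [LinearMap.smul_apply]
      rcases int_cases i with ⟨j, rfl⟩ | ⟨j, rfl⟩
      · by_cases hj : j = m
        · subst hj
          simp
        · refine Submodule.smul_mem _ _ ?_
          rw [PsiP_neg, psiPneg_single]
          split_ifs
          · exact Submodule.zero_mem _
          · refine Submodule.smul_mem _ _ (single_mem_Fbar ?_ hB)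
            simp [hA, Ne.symm hj]
      · refine Submodule.smul_mem _ _ ?_
        rw [PsiP_pos, psiPpos_single]
        split_ifs
        · exact Submodule.smul_mem _ _ (single_mem_Fbar hA (by simp [hB]))
        · exact Submodule.zero_mem _
    · rw [LinearMap.smul_apply]
      rcases int_cases i with ⟨j, rfl⟩ | ⟨j, rfl⟩
      · by_cases hj : j = n
        · subst hj
          simp
        · refine Submodule.smul_mem _ _ ?_
          rw [PsiM_neg, psiMneg_single]
          split_ifs
          · exact Submodule.zero_mem _
          · refine Submodule.smul_mem _ _ (single_mem_Fbar hA ?_)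
            simp [hB, Ne.symm hj]
      · refine Submodule.smul_mem _ _ ?_
        rw [PsiM_pos, psiMpos_single]
        split_ifs
        · exact Submodule.smul_mem _ _ (single_mem_Fbar (by simp [hA]) hB)
        · exact Submodule.zero_mem _
  · intro U hU hinv
    by_cases hbot : U = ⊥
    · exact Or.inl hbot
    refine Or.inr (le_antisymm hU ?_)
    have key : ∀ (i : ℤ) (k : ℕ), i + k ≠ 0 → (-((i : ℂ) + (k : ℂ))) ≠ 0 := by
      intro i k h
      rw [neg_ne_zero]
      exact_mod_cast h
    have hP : ∀ i : ℤ, i + m ≠ 0 → ∀ v ∈ U, PsiP i v ∈ U := fun i hi v hv =>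
      (Submodule.smul_mem_iff _ (key i m hi)).1 (hinv i v hv).1
    have hM : ∀ i : ℤ, i + n ≠ 0 → ∀ v ∈ U, PsiM i v ∈ U := fun i hi v hv =>
      (Submodule.smul_mem_iff _ (key i n hi)).1 (hinv i v hv).2
    have hMpos : ∀ j, ∀ v ∈ U, psiMpos j v ∈ U := fun j => by
      rw [← PsiM_pos]; exact hM _ (by omega)
    have hPpos : ∀ j, ∀ v ∈ U, psiPpos j v ∈ U := fun j => by
      rw [← PsiP_pos]; exact hP _ (by omega)
    have hMneg : ∀ j, j ≠ n → ∀ v ∈ U, psiMneg j v ∈ U := fun j hj => by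
      rw [← PsiM_neg]; exact hM _ (by omega)
    have hPneg : ∀ j, j ≠ m → ∀ v ∈ U, psiPneg j v ∈ U := fun j hj => by
      rw [← PsiP_neg]; exact hP _ (by omega)
    have hvac : (Finsupp.single (∅, ∅) 1 : FockF) ∈ U := by
      obtain ⟨v, hv, hv0⟩ := Submodule.exists_mem_ne_zero_of_ne_bot hbot
      obtain ⟨⟨A, B⟩, hAB, hmax⟩ := Finset.exists_max_image v.support
        (fun x => x.1.card + x.2.card) (Finsupp.support_nonempty_iff.2 hv0)
      exact vac_mem U hMpos hPpos A B v hv (by simpa using hAB)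
        fun C D h => hmax (C, D) (by simpa using h)
    have hB : ∀ B : Finset ℕ, n ∉ B → (Finsupp.single (∅, B) 1 : FockF) ∈ U := by
      intro B
      induction B using Finset.induction_on with
      | empty => exact fun _ => hvac
      | insert b B hb ih =>
        intro hn
        simp only [Finset.mem_insert, not_or] at hn
        have := hMneg b (Ne.symm hn.1) _ (ih hn.2)
        rw [psiMneg_single, if_neg hb] at this
        exact (Submodule.smul_mem_iff _ (sgn'_ne _ _ _)).1 this
    refine Submodule.span_le.2 ?_
    rintro _ ⟨A, B, hA, hnB, rfl⟩
    induction A using Finset.induction_on with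
    | empty => exact hB B hnB
    | insert a A ha ih =>
      simp only [Finset.mem_insert, not_or] at hA
      have := hPneg a (Ne.symm hA.1) _ (ih hA.2)
      rw [psiPneg_single, if_neg ha] at this
      exact (Submodule.smul_mem_iff _ (sgn_ne _ _)).1 this
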